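/- Let s = (β_1, β_2, β_3) ∈ B_3^3 be an irreducible braid system whose Hurwitz orbit s·B_3 is finite, and suppose s is (2,2)-periodic, i.e. e(β_1) ≡ ±2 (mod 6) and e(β_2) ≡ ±1 (mod 6) and e(β_3) ≡ ±1 (mod 6). Then s·(c_1c_2)^3 = s. -/

import Mathlib

open FreeGroup in
/-- The braid relations on `m` strands (generators indexed 0-based by `Fin (m-1)`). -/
def braidRels (m : ℕ) : Set (FreeGroup (Fin (m - 1))) :=
  {r | ∃ i j : Fin (m - 1), (i.val + 2 ≤ j.val ∨ j.val + 2 ≤ i.val) ∧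
        r = of i * of j * (of j * of i)⁻¹} ∪
  {r | ∃ i j : Fin (m - 1), (i.val + 1 = j.val ∨ j.val + 1 = i.val) ∧
        r = of i * of j * of i * (of j * of i * of j)⁻¹}

/-- The braid group on `m` strands. -/
abbrev BraidGroup (m : ℕ) := PresentedGroup (braidRels m)

/-- The Artin generator `σ_i` (1-based index `1 ≤ i ≤ m-1`); junk value `1` out of range. -/
def braidGen (m : ℕ) (i : ℕ) : BraidGroup m :=
  if h : 1 ≤ i ∧ i ≤ m - 1 then PresentedGroup.of ⟨i - 1, by omega⟩ else 1

/-- A braid is periodic if some positive power of it is central. -/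
def IsPeriodic {m : ℕ} (β : BraidGroup m) : Prop :=
  ∃ k : ℕ, 1 ≤ k ∧ β ^ k ∈ Subgroup.center (BraidGroup m)

/-- The elementary Hurwitz move at (0-based) position `i`, as a bijection on `n`-tuples. -/
def hEquiv {G : Type*} [Group G] {n : ℕ} (i : Fin (n - 1)) : Equiv.Perm (Fin n → G) where
  toFun s := fun k =>
    if k.val = i.val then s ⟨i.val + 1, by have := i.isLt; omega⟩
    else if k.val = i.val + 1 then
      (s ⟨i.val + 1, by have := i.isLt; omega⟩)⁻¹ * s ⟨i.val, by have := i.isLt; omega⟩ *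
        s ⟨i.val + 1, by have := i.isLt; omega⟩
    else s k
  invFun t := fun k =>
    if k.val = i.val then
      t ⟨i.val, by have := i.isLt; omega⟩ * t ⟨i.val + 1, by have := i.isLt; omega⟩ *
        (t ⟨i.val, by have := i.isLt; omega⟩)⁻¹
    else if k.val = i.val + 1 then t ⟨i.val, by have := i.isLt; omega⟩
    else t k
  left_inv s := by
    funext k
    have hlt := i.isLt
    rcases k with ⟨kv, hkv⟩
    by_cases h1 : kv = i.val
    · subst h1
      simp [mul_assoc]
    · by_cases h2 : kv = i.val + 1
      · subst h2
        simp
      · simp [h1, h2]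
  right_inv t := by
    funext k
    have hlt := i.isLt
    rcases k with ⟨kv, hkv⟩
    by_cases h1 : kv = i.val
    · subst h1
      simp [mul_assoc]
    · by_cases h2 : kv = i.val + 1
      · subst h2
        simp [mul_assoc]
      · simp [h1, h2]

/-- The (right) Hurwitz action of a word in the generators `σ_1, …, σ_{n-1}` of `B_n`
on `n`-tuples of elements of a group `G`: `hurwitzAct (w₁ * w₂) s = hurwitzAct w₂ (hurwitzAct w₁ s)`. -/
def hurwitzAct {G : Type*} [Group G] {n : ℕ} (w : FreeGroup (Fin (n - 1))) (s : Fin n → G) :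
    Fin n → G :=
  (MulOpposite.unop (FreeGroup.lift (fun i => MulOpposite.op (hEquiv (G := G) (n := n) i)) w)) s

/-- The Hurwitz orbit of a braid system. -/
def hurwitzOrbit {G : Type*} [Group G] {n : ℕ} (s : Fin n → G) : Set (Fin n → G) :=
  {t | ∃ w : FreeGroup (Fin (n - 1)), hurwitzAct w s = t}

/-- The generator `σ_i` (1-based) as a word acting on length-`n` systems. -/
def genWord (n : ℕ) (i : ℕ) : FreeGroup (Fin (n - 1)) :=
  if h : 1 ≤ i ∧ i ≤ n - 1 then FreeGroup.of ⟨i - 1, by omega⟩ else 1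

/-- The pure braid word `c_i = (σ_1⁻¹ ⋯ σ_{i-1}⁻¹) σ_i² (σ_{i-1} ⋯ σ_1)`. -/
def cWord (n : ℕ) (i : ℕ) : FreeGroup (Fin (n - 1)) :=
  ((List.range (i - 1)).map (fun t => (genWord n (t + 1))⁻¹)).prod *
    genWord n i ^ 2 *
    ((List.range (i - 1)).reverse.map (fun t => genWord n (t + 1))).prod

/-- The word `Δ_{(i,j)} = (σ_i σ_{i+1} ⋯ σ_j)(σ_i ⋯ σ_{j-1}) ⋯ (σ_i σ_{i+1})(σ_i)`. -/
def deltaWord (n i j : ℕ) : FreeGroup (Fin (n - 1)) :=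
  ((List.range (j - i + 1)).map (fun t =>
    ((List.range (j - t - i + 1)).map (fun u => genWord n (i + u))).prod)).prod

/-- The exponent-sum homomorphism, valued in `Multiplicative ℤ`. -/
def expSumHom {m : ℕ} : BraidGroup m →* Multiplicative ℤ :=
  PresentedGroup.toGroup (f := fun _ => Multiplicative.ofAdd 1) (by
    rintro r (⟨i, j, -, rfl⟩ | ⟨i, j, -, rfl⟩) <;>
      simp <;> group)

/-- The exponent sum of a braid: `e(σ_i) = 1`. -/
def esum {m : ℕ} (β : BraidGroup m) : ℤ := Multiplicative.toAdd (expSumHom β)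

/-- A braid system is reducible if some non-trivial partition of the index set has all
entries from the two parts commuting. -/
def IsReducible {G : Type*} [Group G] {n : ℕ} (s : Fin n → G) : Prop :=
  ∃ I : Set (Fin n), I.Nonempty ∧ Iᶜ.Nonempty ∧ ∀ i ∈ I, ∀ j ∈ Iᶜ, Commute (s i) (s j)

/-!
Write `s = (a, b, c)`. Since `σ₂² · c₁c₂` is the full twist, applying `σ₂²` and then `c₁c₂`, each
`n` times, conjugates `s` by `(abc)ⁿ`, while `σ₂²` alone, applied `n` times, fixes `a` and
conjugates `b` and `c` by `(bc)ⁿ`. A finite orbit therefore yields `n > 0` such that `(bc)ⁿ`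
commutes with `b, c` and `(abc)ⁿ` with `a, b, c`, and it suffices to replace `n` by `3` in these
relations.

Both `bc` and `abc` have even exponent sum. The representation `B₃ → SL₂(ℤ)` together with the
exponent sum is faithful, and the image `M` of a braid of even exponent sum has nonzero trace `t`.
By Cayley–Hamilton, `Mⁿ⁺¹ = Sₙ(t) M - Sₙ₋₁(t)` with `Sₙ` the rescaled Chebyshev polynomials. If
`|t| ≥ 2`, then `Sₙ(t) ≠ 0`, so whatever commutes with a positive power of `M` commutes with `M`;
if `|t| = 1`, then `M³` is scalar.
-/

section HurwitzAction

variable {G H : Type*} [Group G] [Group H] {n : ℕ}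

theorem hurwitzAct_one (s : Fin n → G) : hurwitzAct 1 s = s := by
  simp [hurwitzAct]

theorem hurwitzAct_mul (v w : FreeGroup (Fin (n - 1))) (s : Fin n → G) :
    hurwitzAct (v * w) s = hurwitzAct w (hurwitzAct v s) := by
  simp [hurwitzAct]

theorem hurwitzAct_of (i : Fin (n - 1)) (s : Fin n → G) :
    hurwitzAct (FreeGroup.of i) s = hEquiv i s := by
  simp [hurwitzAct]

theorem hurwitzAct_injective (w : FreeGroup (Fin (n - 1))) :
    Function.Injective (hurwitzAct (G := G) w) :=
  Equiv.injective _

theorem hurwitzAct_pow (w : FreeGroup (Fin (n - 1))) (k : ℕ) (s : Fin n → G) :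
    hurwitzAct (w ^ k) s = (hurwitzAct w)^[k] s := by
  induction k with
  | zero => exact hurwitzAct_one s
  | succ k ih => rw [pow_succ, hurwitzAct_mul, ih, Function.iterate_succ_apply']

theorem hurwitzAct_comp (φ : G →* H) (w : FreeGroup (Fin (n - 1))) (s : Fin n → G) :
    hurwitzAct w (φ ∘ s) = φ ∘ hurwitzAct w s := by
  induction w using FreeGroup.induction_on generalizing s with
  | C1 => simp only [hurwitzAct_one]
  | of i =>
    funext k
    simp only [hurwitzAct_of, hEquiv, Equiv.coe_fn_mk, Function.comp_apply]
    split_ifs <;> simp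
  | inv_of i ih =>
    apply hurwitzAct_injective (FreeGroup.of i)
    rw [ih, ← hurwitzAct_mul, ← hurwitzAct_mul, inv_mul_cancel, hurwitzAct_one, hurwitzAct_one]
  | mul v w ihv ihw => rw [hurwitzAct_mul, hurwitzAct_mul, ihv, ihw]

theorem exists_pos_hurwitzAct_pow_eq_self {s : Fin n → G} (hfin : (hurwitzOrbit s).Finite)
    (w : FreeGroup (Fin (n - 1))) : ∃ k > 0, hurwitzAct (w ^ k) s = s := by
  have maps_orbit : Set.MapsTo (hurwitzAct w) (hurwitzOrbit s) (hurwitzOrbit s) := by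
    rintro _ ⟨v, rfl⟩
    exact ⟨v * w, hurwitzAct_mul v w s⟩
  have : Finite (hurwitzOrbit s) := hfin
  have restrict_injective : Function.Injective maps_orbit.restrict :=
    maps_orbit.restrict_inj.2 (hurwitzAct_injective w).injOn
  obtain ⟨k, k_pos, hk⟩ := restrict_injective.mem_periodicPts ⟨s, 1, hurwitzAct_one s⟩
  refine ⟨k, k_pos, ?_⟩
  rw [hurwitzAct_pow]
  exact hk.map (g := Subtype.val) fun _ ↦ rfl

end HurwitzAction

section HurwitzActionThree

variable {G : Type*} [Group G] (a b c : G)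

theorem conj_inv_apply_eq_self_iff {g x : G} : MulAut.conj g⁻¹ x = x ↔ Commute g x := by
  rw [MulAut.conj_apply, inv_inv, mul_assoc, inv_mul_eq_iff_eq_mul]
  exact eq_comm

theorem conj_inv_comp_eq_self_iff {ι : Type*} {g : G} {s : ι → G} :
    MulAut.conj g⁻¹ ∘ s = s ↔ ∀ i, Commute g (s i) := by
  simp only [funext_iff, Function.comp_apply, conj_inv_apply_eq_self_iff]

theorem hurwitzAct_genWord_one :
    hurwitzAct (genWord 3 1) ![a, b, c] = ![b, b⁻¹ * a * b, c] := by
  funext i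
  fin_cases i <;> simp [hurwitzAct, genWord, hEquiv]

theorem hurwitzAct_genWord_two :
    hurwitzAct (genWord 3 2) ![a, b, c] = ![a, c, c⁻¹ * b * c] := by
  funext i
  fin_cases i <;> simp [hurwitzAct, genWord, hEquiv]

theorem hurwitzAct_genWord_two_sq :
    hurwitzAct (genWord 3 2 ^ 2) ![a, b, c] =
      ![a, MulAut.conj (b * c)⁻¹ b, MulAut.conj (b * c)⁻¹ c] := by
  rw [pow_two, hurwitzAct_mul, hurwitzAct_genWord_two, hurwitzAct_genWord_two]
  simp [mul_assoc]

theorem hurwitzAct_genWord_two_sq_pow (n : ℕ) :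
    hurwitzAct ((genWord 3 2 ^ 2) ^ n) ![a, b, c] =
      ![a, MulAut.conj ((b * c) ^ n)⁻¹ b, MulAut.conj ((b * c) ^ n)⁻¹ c] := by
  induction n generalizing b c with
  | zero => simp [hurwitzAct_one]
  | succ n ih =>
    have prod_invariant : MulAut.conj (b * c)⁻¹ b * MulAut.conj (b * c)⁻¹ c = b * c := by
      rw [← map_mul, conj_inv_apply_eq_self_iff]
    rw [pow_succ' (genWord 3 2 ^ 2), hurwitzAct_mul, hurwitzAct_genWord_two_sq, ih,
      prod_invariant, ← MulAut.mul_apply, ← MulAut.mul_apply, ← map_mul, ← mul_inv_rev,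
      ← pow_succ']

theorem hurwitzAct_genWord_two_sq_pow_eq_self_iff (n : ℕ) :
    hurwitzAct ((genWord 3 2 ^ 2) ^ n) ![a, b, c] = ![a, b, c] ↔
      Commute ((b * c) ^ n) b ∧ Commute ((b * c) ^ n) c := by
  rw [hurwitzAct_genWord_two_sq_pow, ← conj_inv_apply_eq_self_iff, ← conj_inv_apply_eq_self_iff]
  simp only [Matrix.vecCons_inj, true_and, and_true]

theorem cWord_one_mul_cWord_two :
    cWord 3 1 * cWord 3 2 = genWord 3 1 * genWord 3 2 ^ 2 * genWord 3 1 := by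
  simp [cWord, pow_two, mul_assoc]

-- Since `c₁c₂ = σ₁σ₂²σ₁`, the product `σ₂²c₁c₂` is the full twist.
theorem hurwitzAct_cWord_mul_hurwitzAct_genWord_two_sq :
    hurwitzAct (cWord 3 1 * cWord 3 2) (hurwitzAct (genWord 3 2 ^ 2) ![a, b, c]) =
      MulAut.conj (a * b * c)⁻¹ ∘ ![a, b, c] := by
  rw [hurwitzAct_genWord_two_sq, cWord_one_mul_cWord_two, hurwitzAct_mul, hurwitzAct_mul,
    hurwitzAct_genWord_one, hurwitzAct_genWord_two_sq, hurwitzAct_genWord_one]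
  funext i
  fin_cases i <;> simp [mul_assoc]

theorem hurwitzAct_cWord_mul_pow_hurwitzAct_genWord_two_sq_pow (n : ℕ) :
    hurwitzAct ((cWord 3 1 * cWord 3 2) ^ n) (hurwitzAct ((genWord 3 2 ^ 2) ^ n) ![a, b, c]) =
      MulAut.conj ((a * b * c) ^ n)⁻¹ ∘ ![a, b, c] := by
  induction n generalizing b c with
  | zero => simp [hurwitzAct_one]
  | succ n ih =>
    have prod_invariant :
        a * MulAut.conj (b * c)⁻¹ b * MulAut.conj (b * c)⁻¹ c = a * b * c := by
      rw [mul_assoc, ← map_mul, conj_inv_apply_eq_self_iff.2 (Commute.refl _), mul_assoc]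
    have equivariant (s : Fin 3 → G) :
        hurwitzAct (cWord 3 1 * cWord 3 2) (MulAut.conj ((a * b * c) ^ n)⁻¹ ∘ s) =
          MulAut.conj ((a * b * c) ^ n)⁻¹ ∘ hurwitzAct (cWord 3 1 * cWord 3 2) s :=
      hurwitzAct_comp (MulAut.conj ((a * b * c) ^ n)⁻¹).toMonoidHom _ s
    rw [pow_succ (cWord 3 1 * cWord 3 2), pow_succ' (genWord 3 2 ^ 2), hurwitzAct_mul _ (_ * _),
      hurwitzAct_mul (genWord 3 2 ^ 2), hurwitzAct_genWord_two_sq, ih, prod_invariant, equivariant,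
      ← hurwitzAct_genWord_two_sq, hurwitzAct_cWord_mul_hurwitzAct_genWord_two_sq,
      ← Function.comp_assoc, ← MulAut.coe_mul, ← map_mul, ← mul_inv_rev, ← pow_succ']

variable {a b c}

theorem exists_pos_commute_pow_of_finite_hurwitzOrbit
    (hfin : (hurwitzOrbit ![a, b, c]).Finite) :
    ∃ n > 0, (Commute ((b * c) ^ n) b ∧ Commute ((b * c) ^ n) c) ∧
      ∀ i, Commute ((a * b * c) ^ n) (![a, b, c] i) := by
  obtain ⟨k, k_pos, hk⟩ := exists_pos_hurwitzAct_pow_eq_self hfin (genWord 3 2 ^ 2)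
  obtain ⟨m, m_pos, hm⟩ := exists_pos_hurwitzAct_pow_eq_self hfin (cWord 3 1 * cWord 3 2)
  rw [hurwitzAct_pow] at hk hm
  have sq_fixed : hurwitzAct ((genWord 3 2 ^ 2) ^ (k * m)) ![a, b, c] = ![a, b, c] := by
    rw [hurwitzAct_pow]
    exact Function.IsPeriodicPt.mul_const hk m
  have cWord_fixed : hurwitzAct ((cWord 3 1 * cWord 3 2) ^ (k * m)) ![a, b, c] = ![a, b, c] := by
    rw [hurwitzAct_pow]
    exact Function.IsPeriodicPt.const_mul hm k
  refine ⟨k * m, Nat.mul_pos k_pos m_pos,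
    (hurwitzAct_genWord_two_sq_pow_eq_self_iff a b c _).1 sq_fixed, ?_⟩
  rw [← conj_inv_comp_eq_self_iff, ← hurwitzAct_cWord_mul_pow_hurwitzAct_genWord_two_sq_pow,
    sq_fixed, cWord_fixed]

theorem hurwitzAct_cWord_mul_pow_eq_self {n : ℕ}
    (hbc : Commute ((b * c) ^ n) b ∧ Commute ((b * c) ^ n) c)
    (habc : ∀ i, Commute ((a * b * c) ^ n) (![a, b, c] i)) :
    hurwitzAct ((cWord 3 1 * cWord 3 2) ^ n) ![a, b, c] = ![a, b, c] := by
  have h := hurwitzAct_cWord_mul_pow_hurwitzAct_genWord_two_sq_pow a b c n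
  rwa [(hurwitzAct_genWord_two_sq_pow_eq_self_iff a b c n).2 hbc,
    conj_inv_comp_eq_self_iff.2 habc] at h

end HurwitzActionThree

section UnimodularMatrices

open Polynomial Polynomial.Chebyshev Matrix

theorem sq_eq_trace_smul_sub_one {R : Type*} [CommRing R] {M : Matrix (Fin 2) (Fin 2) R}
    (hM : M.det = 1) : M ^ 2 = M.trace • M - 1 := by
  nontriviality R
  have cayley_hamilton := M.aeval_self_charpoly
  simp only [charpoly_fin_two, hM, map_add, map_sub, map_mul, map_pow, map_one, aeval_X,
    Polynomial.aeval_C, Algebra.algebraMap_eq_smul_one, smul_mul_assoc, one_mul] at cayley_hamilton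
  rw [← sub_eq_zero, ← cayley_hamilton]
  abel

theorem pow_succ_eq_eval_S_trace_smul_sub {R : Type*} [CommRing R]
    {M : Matrix (Fin 2) (Fin 2) R} (hM : M.det = 1) (n : ℕ) :
    M ^ (n + 1) =
      (S R n).eval M.trace • M - (S R (n - 1)).eval M.trace • (1 : Matrix (Fin 2) (Fin 2) R) := by
  induction n with
  | zero => simp
  | succ n ih =>
    rw [pow_succ, ih, sub_mul, smul_mul_assoc, smul_mul_assoc, one_mul, ← sq,
      sq_eq_trace_smul_sub_one hM, Nat.cast_succ, S_add_one, add_sub_cancel_right, eval_sub,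
      eval_mul, eval_X]
    module

variable {R : Type*} [CommRing R] [LinearOrder R] [IsStrictOrderedRing R]

theorem abs_eval_S_sub_one_lt {t : R} (ht : 2 ≤ |t|) (n : ℕ) :
    |(S R (n - 1)).eval t| < |(S R n).eval t| := by
  induction n with
  | zero => simp
  | succ n ih =>
    have recurrence :
        t * (S R n).eval t = (S R (n + 1)).eval t + (S R (n - 1)).eval t := by
      rw [S_add_one, eval_sub, eval_mul, eval_X, sub_add_cancel]
    have triangle := abs_add_le ((S R (n + 1)).eval t) ((S R (n - 1)).eval t)
    rw [← recurrence, abs_mul] at triangle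
    rw [Nat.cast_succ, add_sub_cancel_right]
    nlinarith [abs_nonneg ((S R n).eval t)]

theorem commute_of_commute_pow_of_two_le_abs_trace {M A : Matrix (Fin 2) (Fin 2) R}
    (hM : M.det = 1) (htr : 2 ≤ |M.trace|) {k : ℕ} (hk : 0 < k) (h : Commute (M ^ k) A) :
    Commute M A := by
  obtain ⟨n, rfl⟩ := Nat.exists_eq_add_one.2 hk
  have coeff_ne_zero : (S R n).eval M.trace ≠ 0 :=
    abs_pos.1 ((abs_nonneg _).trans_lt (abs_eval_S_sub_one_lt htr n))
  have h_smul : Commute ((S R n).eval M.trace • M) A := by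
    have h_add := h.add_left ((Commute.one_left A).smul_left ((S R (n - 1)).eval M.trace))
    rwa [pow_succ_eq_eval_S_trace_smul_sub hM, sub_add_cancel] at h_add
  rw [Commute, SemiconjBy, smul_mul_assoc, mul_smul_comm] at h_smul
  exact smul_right_injective _ coeff_ne_zero h_smul

theorem commute_pow_three_of_commute_pow {M A : Matrix (Fin 2) (Fin 2) ℤ} (hM : M.det = 1)
    (htr : M.trace ≠ 0) {k : ℕ} (hk : 0 < k) (h : Commute (M ^ k) A) : Commute (M ^ 3) A := by
  by_cases two_le : 2 ≤ |M.trace|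
  · exact (commute_of_commute_pow_of_two_le_abs_trace hM two_le hk h).pow_left 3
  · have trace_sq : M.trace ^ 2 = 1 := by
      rw [← sq_abs, show |M.trace| = 1 by have := abs_pos.2 htr; omega, one_pow]
    have pow_three : M ^ 3 = -M.trace • (1 : Matrix (Fin 2) (Fin 2) ℤ) := by
      have := pow_succ_eq_eval_S_trace_smul_sub hM 2
      simpa [S_two, trace_sq] using this
    rw [pow_three]
    exact (Commute.one_left A).smul_left _

end UnimodularMatrices

namespace BraidGroup

open scoped MatrixGroups commutatorElement

local notation "σ₁" => braidGen 3 1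
local notation "σ₂" => braidGen 3 2

theorem sigma_one_mul_sigma_two_mul_sigma_one : σ₁ * σ₂ * σ₁ = σ₂ * σ₁ * σ₂ :=
  PresentedGroup.mk_eq_mk_of_mul_inv_mem (Or.inr ⟨0, 1, Or.inl rfl, rfl⟩)

theorem closure_sigma : Subgroup.closure {σ₁, σ₂} = ⊤ := by
  rw [eq_top_iff, ← PresentedGroup.closure_range_of, Subgroup.closure_le]
  rintro _ ⟨i, rfl⟩
  apply Subgroup.subset_closure
  fin_cases i
  exacts [Or.inl rfl, Or.inr rfl]

/-- Garside's half twist `Δ = σ₁σ₂σ₁`. -/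
def halfTwist : BraidGroup 3 := σ₁ * σ₂ * σ₁

/-- The element `δ = σ₁σ₂`, rotating the three strands by a third of a turn. -/
def rotation : BraidGroup 3 := σ₁ * σ₂

/-- The full twist `Δ²`, which generates the centre of `B₃`. -/
def fullTwist : BraidGroup 3 := halfTwist ^ 2

local notation "Δ" => halfTwist
local notation "δ" => rotation

theorem halfTwist_mul_sigma_one : Δ * σ₁ = σ₂ * Δ := by
  calc Δ * σ₁ = σ₂ * σ₁ * σ₂ * σ₁ := by rw [halfTwist, sigma_one_mul_sigma_two_mul_sigma_one]
    _ = σ₂ * Δ := by simp only [halfTwist, mul_assoc]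

theorem halfTwist_mul_sigma_two : Δ * σ₂ = σ₁ * Δ := by
  calc Δ * σ₂ = σ₁ * (σ₂ * σ₁ * σ₂) := by simp only [halfTwist, mul_assoc]
    _ = σ₁ * Δ := by rw [← sigma_one_mul_sigma_two_mul_sigma_one, halfTwist]

theorem rotation_mul_sigma_one : δ * σ₁ = Δ := rfl

theorem rotation_mul_sigma_two_inv : δ * σ₂⁻¹ = σ₁ :=
  mul_inv_cancel_right _ _

theorem rotation_mul_halfTwist : δ * Δ = fullTwist * σ₂⁻¹ := by
  rw [eq_mul_inv_iff_mul_eq, mul_assoc, halfTwist_mul_sigma_two, ← mul_assoc, fullTwist, sq]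
  rfl

theorem rotation_pow_three : δ ^ 3 = fullTwist := by
  calc δ ^ 3 = (σ₁ * σ₂ * σ₁) * (σ₂ * σ₁ * σ₂) := by
        simp only [rotation, pow_succ, pow_zero, one_mul, mul_assoc]
    _ = fullTwist := by rw [← sigma_one_mul_sigma_two_mul_sigma_one, fullTwist, sq, halfTwist]

theorem fullTwist_mem_center : fullTwist ∈ Subgroup.center (BraidGroup 3) := by
  suffices Subgroup.closure {σ₁, σ₂} ≤ Subgroup.centralizer {fullTwist} by
    rwa [closure_sigma, top_le_iff, Subgroup.centralizer_eq_top_iff_subset,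
      Set.singleton_subset_iff] at this
  rw [Subgroup.closure_le, Set.pair_subset_iff]
  constructor <;> rw [SetLike.mem_coe, Subgroup.mem_centralizer_singleton_iff, fullTwist, sq]
  · rw [mul_assoc Δ Δ, halfTwist_mul_sigma_one, ← mul_assoc Δ, halfTwist_mul_sigma_two, mul_assoc]
  · rw [mul_assoc Δ Δ, halfTwist_mul_sigma_two, ← mul_assoc Δ, halfTwist_mul_sigma_one, mul_assoc]

theorem commute_fullTwist_zpow (k : ℤ) (g : BraidGroup 3) : Commute (fullTwist ^ k) g :=
  (Subgroup.mem_center_iff.1 (zpow_mem fullTwist_mem_center k) g).symm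

theorem closure_halfTwist_rotation : Subgroup.closure {Δ, δ} = ⊤ := by
  have halfTwist_mem : Δ ∈ Subgroup.closure {Δ, δ} := Subgroup.subset_closure (Or.inl rfl)
  have rotation_mem : δ ∈ Subgroup.closure {Δ, δ} := Subgroup.subset_closure (Or.inr rfl)
  have sigma_one_mem : σ₁ ∈ Subgroup.closure {Δ, δ} := by
    simpa [← rotation_mul_sigma_one] using mul_mem (inv_mem rotation_mem) halfTwist_mem
  rw [eq_top_iff, ← closure_sigma, Subgroup.closure_le, Set.pair_subset_iff]
  refine ⟨sigma_one_mem, ?_⟩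
  simpa [rotation] using mul_mem (inv_mem sigma_one_mem) rotation_mem

/-- The monoid of alternating braids, generated by `σ₁` and `σ₂⁻¹`. -/
def alternatingMonoid : Submonoid (BraidGroup 3) := Submonoid.closure {σ₁, σ₂⁻¹}

theorem sigma_one_mul_mem_alternatingMonoid {w : BraidGroup 3} (hw : w ∈ alternatingMonoid) :
    σ₁ * w ∈ alternatingMonoid :=
  mul_mem (Submonoid.subset_closure (Or.inl rfl)) hw

theorem sigma_two_inv_mul_mem_alternatingMonoid {w : BraidGroup 3} (hw : w ∈ alternatingMonoid) :
    σ₂⁻¹ * w ∈ alternatingMonoid :=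
  mul_mem (Submonoid.subset_closure (Or.inr rfl)) hw

theorem eq_one_or_eq_mul_of_mem_alternatingMonoid {w : BraidGroup 3}
    (hw : w ∈ alternatingMonoid) :
    w = 1 ∨ ∃ v ∈ alternatingMonoid, w = σ₁ * v ∨ w = σ₂⁻¹ * v := by
  induction hw using Submonoid.closure_induction_left with
  | one => exact Or.inl rfl
  | mul_left g hg v hv _ =>
    rcases hg with rfl | rfl
    exacts [Or.inr ⟨v, hv, Or.inl rfl⟩, Or.inr ⟨v, hv, Or.inr rfl⟩]

/-- The braid `g` is a power of the full twist times `p * w * q` with `w` alternating and `p`, `q`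
among finitely many choices. Modulo the full twist, `B₃` is the free product `ℤ/2 ∗ ℤ/3` of `⟨Δ⟩`
and `⟨δ⟩`, with `σ₁ = δ⁻¹Δ` and `σ₂⁻¹ = δΔ`; this lifts its normal form to `B₃`. -/
def HasNormalForm (g : BraidGroup 3) : Prop :=
  ∃ k : ℤ, ∃ p ∈ ({1, Δ} : Set (BraidGroup 3)), ∃ w ∈ alternatingMonoid,
    ∃ q ∈ ({1, δ, δ⁻¹} : Set (BraidGroup 3)), g = fullTwist ^ k * (p * w * q)

namespace HasNormalForm

variable {g : BraidGroup 3}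

theorem fullTwist_zpow_mul (m : ℤ) (hg : HasNormalForm g) :
    HasNormalForm (fullTwist ^ m * g) := by
  obtain ⟨k, p, hp, w, hw, q, hq, rfl⟩ := hg
  exact ⟨m + k, p, hp, w, hw, q, hq, by rw [zpow_add, mul_assoc (fullTwist ^ m)]⟩

theorem halfTwist_mul (hg : HasNormalForm g) : HasNormalForm (Δ * g) := by
  obtain ⟨k, p, hp, w, hw, q, hq, rfl⟩ := hg
  rw [← (commute_fullTwist_zpow k Δ).left_comm]
  apply fullTwist_zpow_mul
  rcases hp with rfl | rfl
  · exact ⟨0, Δ, Or.inr rfl, w, hw, q, hq, by simp [mul_assoc]⟩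
  · exact ⟨1, 1, Or.inl rfl, w, hw, q, hq, by simp [fullTwist, sq, mul_assoc]⟩

theorem rotation_mul_alternating_mul {w q : BraidGroup 3} (hw : w ∈ alternatingMonoid)
    (hq : q ∈ ({1, δ, δ⁻¹} : Set (BraidGroup 3))) : HasNormalForm (δ * (w * q)) := by
  obtain rfl | ⟨v, hv, rfl | rfl⟩ := eq_one_or_eq_mul_of_mem_alternatingMonoid hw
  · rcases hq with rfl | rfl | rfl
    · exact ⟨0, 1, Or.inl rfl, 1, one_mem _, δ, by simp, by simp⟩
    · exact ⟨1, 1, Or.inl rfl, 1, one_mem _, δ⁻¹, by simp, by simp [← rotation_pow_three, pow_succ]⟩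
    · exact ⟨0, 1, Or.inl rfl, 1, one_mem _, 1, by simp, by simp⟩
  · exact ⟨0, Δ, Or.inr rfl, v, hv, q, hq, by simp [← rotation_mul_sigma_one, mul_assoc]⟩
  · refine ⟨0, 1, Or.inl rfl, σ₁ * v, sigma_one_mul_mem_alternatingMonoid hv, q, hq, ?_⟩
    rw [← rotation_mul_sigma_two_inv]
    simp only [zpow_zero, one_mul, mul_assoc]

theorem rotation_mul (hg : HasNormalForm g) : HasNormalForm (δ * g) := by
  obtain ⟨k, p, hp, w, hw, q, hq, rfl⟩ := hg
  rw [← (commute_fullTwist_zpow k δ).left_comm]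
  apply fullTwist_zpow_mul
  rcases hp with rfl | rfl
  · rw [one_mul]
    exact rotation_mul_alternating_mul hw hq
  · refine ⟨1, 1, Or.inl rfl, σ₂⁻¹ * w, sigma_two_inv_mul_mem_alternatingMonoid hw, q, hq, ?_⟩
    rw [mul_assoc, ← mul_assoc δ, rotation_mul_halfTwist]
    simp only [zpow_one, one_mul, mul_assoc]

theorem halfTwist_inv_mul (hg : HasNormalForm g) : HasNormalForm (Δ⁻¹ * g) := by
  have : Δ⁻¹ * g = fullTwist ^ (-1 : ℤ) * (Δ * g) := by simp [fullTwist, sq, mul_assoc]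
  rw [this]
  exact hg.halfTwist_mul.fullTwist_zpow_mul _

theorem rotation_inv_mul (hg : HasNormalForm g) : HasNormalForm (δ⁻¹ * g) := by
  have : δ⁻¹ * g = fullTwist ^ (-1 : ℤ) * (δ * (δ * g)) := by
    simp [← rotation_pow_three, pow_succ, mul_assoc]
  rw [this]
  exact hg.rotation_mul.rotation_mul.fullTwist_zpow_mul _

end HasNormalForm

theorem hasNormalForm (g : BraidGroup 3) : HasNormalForm g := by
  have hg : g ∈ Subgroup.closure {Δ, δ} := closure_halfTwist_rotation ▸ Subgroup.mem_top g
  induction hg using Subgroup.closure_induction_left with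
  | one => exact ⟨0, 1, Or.inl rfl, 1, one_mem _, 1, Or.inl rfl, by simp⟩
  | mul_left x hx y _ hy =>
    rcases hx with rfl | rfl
    exacts [hy.halfTwist_mul, hy.rotation_mul]
  | inv_mul_cancel x hx y _ hy =>
    rcases hx with rfl | rfl
    exacts [hy.halfTwist_inv_mul, hy.rotation_inv_mul]

/-- The reduced Burau representation of `B₃` at `t = -1`, sending `σ₁` and `σ₂` to the elementary
matrices `!![1, 1; 0, 1]` and `!![1, 0; -1, 1]`. -/
def toSL : BraidGroup 3 →* SL(2, ℤ) :=
  PresentedGroup.toGroup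
    (f := ![ModularGroup.T, ModularGroup.S * ModularGroup.T * ModularGroup.S⁻¹]) (by
      rintro _ (⟨i, j, hij, rfl⟩ | ⟨i, j, hij, rfl⟩) <;>
        fin_cases i <;> fin_cases j <;> first | (simp at hij; done) | decide)

theorem toSL_sigma_one : toSL σ₁ = ModularGroup.T := by
  simp [toSL, braidGen]

theorem toSL_sigma_two : toSL σ₂ = ModularGroup.S * ModularGroup.T * ModularGroup.S⁻¹ := by
  simp [toSL, braidGen]

theorem toSL_rotation :
    toSL δ = ModularGroup.T * (ModularGroup.S * ModularGroup.T * ModularGroup.S⁻¹) := by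
  rw [rotation, map_mul, toSL_sigma_one, toSL_sigma_two]

theorem toSL_halfTwist : toSL Δ = ModularGroup.S⁻¹ := by
  rw [halfTwist, map_mul, map_mul, toSL_sigma_one, toSL_sigma_two]
  decide

theorem toSL_fullTwist : toSL fullTwist = -1 := by
  rw [fullTwist, map_pow, toSL_halfTwist]
  decide

theorem toSL_nonneg_of_mem_alternatingMonoid {w : BraidGroup 3} (hw : w ∈ alternatingMonoid)
    (i j : Fin 2) : 0 ≤ toSL w i j := by
  induction hw using Submonoid.closure_induction generalizing i j with
  | mem g hg =>
    rcases hg with rfl | rfl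
    · rw [toSL_sigma_one]
      fin_cases i <;> fin_cases j <;> decide
    · rw [map_inv, toSL_sigma_two]
      fin_cases i <;> fin_cases j <;> decide
  | one =>
    rw [map_one]
    fin_cases i <;> fin_cases j <;> decide
  | mul g h _ _ ihg ihh =>
    rw [map_mul, Matrix.SpecialLinearGroup.coe_mul, Matrix.mul_apply]
    exact Finset.sum_nonneg fun k _ ↦ mul_nonneg (ihg i k) (ihh k j)

theorem eq_one_of_mem_alternatingMonoid_of_toSL_eq_one {w : BraidGroup 3}
    (hw : w ∈ alternatingMonoid) (h : toSL w = 1) : w = 1 := by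
  obtain rfl | ⟨v, hv, rfl | rfl⟩ := eq_one_or_eq_mul_of_mem_alternatingMonoid hw
  · rfl
  · have hv_eq : toSL v = (toSL σ₁)⁻¹ := by rwa [map_mul, mul_eq_one_iff_inv_eq, eq_comm] at h
    exact absurd (toSL_nonneg_of_mem_alternatingMonoid hv 0 1)
      (by rw [hv_eq, toSL_sigma_one]; decide)
  · have hv_eq : toSL v = toSL σ₂ := by rwa [map_mul, map_inv, inv_mul_eq_one, eq_comm] at h
    exact absurd (toSL_nonneg_of_mem_alternatingMonoid hv 1 0)
      (by rw [hv_eq, toSL_sigma_two]; decide)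

theorem eq_one_and_eq_one_of_toSL_eq_inv_mul_inv {p w q : BraidGroup 3}
    (hp : p ∈ ({1, Δ} : Set (BraidGroup 3))) (hw : w ∈ alternatingMonoid)
    (hq : q ∈ ({1, δ, δ⁻¹} : Set (BraidGroup 3)))
    (h : toSL w = (toSL p)⁻¹ * (toSL q)⁻¹ ∨ toSL w = -((toSL p)⁻¹ * (toSL q)⁻¹)) :
    p = 1 ∧ q = 1 := by
  have entries_nonneg := toSL_nonneg_of_mem_alternatingMonoid hw
  rcases hp with rfl | rfl <;> rcases hq with rfl | rfl | rfl
  · exact ⟨rfl, rfl⟩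
  -- For every other pair the matrix `(toSL p)⁻¹ * (toSL q)⁻¹` has entries of both signs.
  all_goals
    simp only [map_one, map_inv, toSL_halfTwist, toSL_rotation] at h
    rw [Fin.forall_fin_two, Fin.forall_fin_two, Fin.forall_fin_two] at entries_nonneg
    rcases h with h | h <;> rw [h] at entries_nonneg <;> exact absurd entries_nonneg (by decide)

theorem mul_mul_eq_one_of_toSL_eq_one_or_neg_one {p w q : BraidGroup 3}
    (hp : p ∈ ({1, Δ} : Set (BraidGroup 3))) (hw : w ∈ alternatingMonoid)
    (hq : q ∈ ({1, δ, δ⁻¹} : Set (BraidGroup 3)))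
    (h : toSL (p * w * q) = 1 ∨ toSL (p * w * q) = -1) : p * w * q = 1 := by
  have toSL_w : toSL w = (toSL p)⁻¹ * toSL (p * w * q) * (toSL q)⁻¹ := by
    simp only [map_mul]
    group
  obtain ⟨rfl, rfl⟩ : p = 1 ∧ q = 1 := by
    apply eq_one_and_eq_one_of_toSL_eq_inv_mul_inv hp hw hq
    rcases h with h | h <;> rw [h] at toSL_w
    · exact Or.inl (by rw [toSL_w, mul_one])
    · exact Or.inr (by rw [toSL_w, mul_neg_one, neg_mul])
  rw [one_mul, mul_one] at h ⊢
  refine eq_one_of_mem_alternatingMonoid_of_toSL_eq_one hw (h.resolve_right fun h_neg ↦ ?_)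
  exact absurd (toSL_nonneg_of_mem_alternatingMonoid hw 0 0) (by rw [h_neg]; decide)

theorem toSL_fullTwist_zpow (k : ℤ) : toSL (fullTwist ^ k) = (-1) ^ k := by
  rw [map_zpow, toSL_fullTwist]

theorem mem_zpowers_fullTwist_of_toSL_eq_one_or_neg_one {g : BraidGroup 3}
    (h : toSL g = 1 ∨ toSL g = -1) : g ∈ Subgroup.zpowers fullTwist := by
  obtain ⟨k, p, hp, w, hw, q, hq, rfl⟩ := hasNormalForm g
  have core_eq_one : p * w * q = 1 := by
    apply mul_mul_eq_one_of_toSL_eq_one_or_neg_one hp hw hq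
    rw [map_mul, toSL_fullTwist_zpow] at h
    rcases Int.even_or_odd k with hk | hk
    · rwa [hk.neg_one_zpow, one_mul] at h
    · rwa [hk.neg_one_zpow, neg_one_mul, neg_inj, neg_eq_iff_eq_neg, or_comm] at h
  rw [core_eq_one, mul_one]
  exact Subgroup.zpow_mem_zpowers _ _

theorem esum_mul {m : ℕ} (g h : BraidGroup m) : esum (g * h) = esum g + esum h := by
  simp [esum]

theorem esum_inv {m : ℕ} (g : BraidGroup m) : esum g⁻¹ = -esum g := by
  simp [esum]

theorem esum_pow {m : ℕ} (g : BraidGroup m) (n : ℕ) : esum (g ^ n) = n * esum g := by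
  simp [esum]

theorem esum_zpow {m : ℕ} (g : BraidGroup m) (k : ℤ) : esum (g ^ k) = k * esum g := by
  simp [esum]

theorem esum_fullTwist : esum fullTwist = 6 := rfl

theorem commute_of_commute_toSL {g h : BraidGroup 3} (hgh : Commute (toSL g) (toSL h)) :
    Commute g h := by
  have toSL_commutator : toSL ⁅g, h⁆ = 1 := by
    rwa [map_commutatorElement, commutatorElement_eq_one_iff_commute]
  obtain ⟨k, hk⟩ := Subgroup.mem_zpowers_iff.1
    (mem_zpowers_fullTwist_of_toSL_eq_one_or_neg_one (Or.inl toSL_commutator))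
  have k_eq_zero : k = 0 := by
    have esum_eq := congrArg esum hk
    rw [esum_zpow, esum_fullTwist, commutatorElement_def, esum_mul, esum_mul, esum_mul, esum_inv,
      esum_inv] at esum_eq
    omega
  rw [← commutatorElement_eq_one_iff_commute, ← hk, k_eq_zero, zpow_zero]

theorem trace_toSL_ne_zero_of_even_esum {g : BraidGroup 3} (hg : Even (esum g)) :
    (toSL g).1.trace ≠ 0 := by
  intro trace_eq_zero
  have toSL_sq : toSL (g ^ 2) = -1 := by
    apply Subtype.ext
    rw [map_pow, Matrix.SpecialLinearGroup.coe_pow, sq_eq_trace_smul_sub_one (toSL g).2,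
      trace_eq_zero, zero_smul, zero_sub, Matrix.SpecialLinearGroup.coe_neg,
      Matrix.SpecialLinearGroup.coe_one]
  obtain ⟨k, hk⟩ := Subgroup.mem_zpowers_iff.1
    (mem_zpowers_fullTwist_of_toSL_eq_one_or_neg_one (Or.inr toSL_sq))
  have k_odd : ¬ Even k := fun k_even ↦ by
    rw [← hk, toSL_fullTwist_zpow, k_even.neg_one_zpow] at toSL_sq
    exact absurd toSL_sq (by decide)
  have esum_eq := congrArg esum hk
  rw [esum_zpow, esum_fullTwist, esum_pow] at esum_eq
  rw [Int.even_iff] at hg k_odd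
  omega

theorem commute_pow_three_of_even_esum {g x : BraidGroup 3} (hg : Even (esum g)) {k : ℕ}
    (hk : 0 < k) (h : Commute (g ^ k) x) : Commute (g ^ 3) x := by
  have h_matrix : Commute ((toSL g).1 ^ k) (toSL x).1 := by
    simpa [commute_iff_eq] using congrArg Subtype.val (h.map toSL).eq
  have h_cube := commute_pow_three_of_commute_pow (toSL g).2 (trace_toSL_ne_zero_of_even_esum hg)
    hk h_matrix
  exact commute_of_commute_toSL (Subtype.ext (by simpa using h_cube.eq))

end BraidGroup

open BraidGroup

theorem period22_cword_cube_general (s : Fin 3 → BraidGroup 3) (hfin : (hurwitzOrbit s).Finite)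
    (h0 : Even (esum (s 0))) (h12 : Even (esum (s 1) + esum (s 2))) :
    hurwitzAct ((cWord 3 1 * cWord 3 2) ^ 3) s = s := by
  rw [← FinVec.etaExpand_eq s] at hfin ⊢
  have even_last : Even (esum (s 1 * s 2)) := by rwa [esum_mul]
  have even_total : Even (esum (s 0 * s 1 * s 2)) := by
    rw [mul_assoc, esum_mul]
    exact h0.add even_last
  obtain ⟨n, n_pos, ⟨commute_one, commute_two⟩, commute_all⟩ :=
    exists_pos_commute_pow_of_finite_hurwitzOrbit hfin
  exact hurwitzAct_cWord_mul_pow_eq_self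
    ⟨commute_pow_three_of_even_esum even_last n_pos commute_one,
      commute_pow_three_of_even_esum even_last n_pos commute_two⟩
    fun i ↦ commute_pow_three_of_even_esum even_total n_pos (commute_all i)

/-- For an irreducible `(2,2)`-periodic system with finite Hurwitz orbit,
`s·(c_1 c_2)^3 = s`. -/
theorem period22_cword_cube (s : Fin 3 → BraidGroup 3)
    (hirr : ¬ IsReducible s)
    (hfin : (hurwitzOrbit s).Finite)
    (h1 : Int.ModEq 6 (esum (s 0)) 2 ∨ Int.ModEq 6 (esum (s 0)) (-2))
    (h2 : Int.ModEq 6 (esum (s 1)) 1 ∨ Int.ModEq 6 (esum (s 1)) (-1))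
    (h3 : Int.ModEq 6 (esum (s 2)) 1 ∨ Int.ModEq 6 (esum (s 2)) (-1)) :
    hurwitzAct ((cWord 3 1 * cWord 3 2) ^ 3) s = s := by
  rw [Int.modEq_iff_dvd, Int.modEq_iff_dvd] at h1 h2 h3
  exact period22_cword_cube_general s hfin (Int.even_iff.2 (by omega)) (Int.even_iff.2 (by omega))
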